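/- arXiv:1612.05192 — 7 statements merged into one kernel-verified Lean document; each statement's English description precedes it below -/
import Mathlib

section
/- Let K be a field, let n, k be natural numbers, let u = (1,…,1) ∈ K^{n+1}, and let S ⊆ K^{n+1} be a set of vectors all of whose coordinates are nonzero. For every linear subspace L ⊆ K^{n+1} of dimension k+1 the following are equivalent: (i) L contains some point of S; (ii) there exist x ∈ S and a linear subspace M ⊆ K^{n+1} of dimension k+1 such that u ∈ M and L = D_x(M). (This is the set-theoretic form, on affine cones over points of the torus, of the Hadamard decomposition Z_{X°} = ψ(X°) ⋆ 𝒢_u of the Chow hypersurface.) -/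
/-!
Since every coordinate of `x ∈ S` is nonzero, `D_x` is invertible with inverse `D_{x⁻¹}`, and it
sends `u = (1, …, 1)` to `x`. Hence `x ∈ L` if and only if `u ∈ D_{x⁻¹}(L)`, and the only candidate
for `M` is `D_{x⁻¹}(L)`, which has the same dimension as `L` because `D_{x⁻¹}` is injective.
-/

/-- Set-theoretic Hadamard decomposition `Z_{X°} = ψ(X°) ⋆ 𝒢_u` on affine cones.
`D_x` is coordinatewise multiplication by `x`, realized as `LinearMap.mulLeft K x` on the
commutative ring `Fin (n+1) → K`. -/
theorem chow_hadamard_decomposition {K : Type*} [Field K] (n k : ℕ)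
    (S : Set (Fin (n + 1) → K)) (hS : ∀ x ∈ S, ∀ i, x i ≠ 0)
    (L : Submodule K (Fin (n + 1) → K)) (hL : Module.finrank K L = k + 1) :
    (∃ x ∈ S, x ∈ L) ↔
      ∃ x ∈ S, ∃ M : Submodule K (Fin (n + 1) → K),
        Module.finrank K M = k + 1 ∧ (fun _ => (1 : K)) ∈ M ∧
        L = M.map (LinearMap.mulLeft K x) := by
  constructor
  · rintro ⟨x, hxS, hxL⟩
    have hx : x * x⁻¹ = 1 := funext fun i => mul_inv_cancel₀ (hS x hxS i)
    have hx' : x⁻¹ * x = 1 := by rw [mul_comm, hx]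
    have hinj : Function.Injective (LinearMap.mulLeft K x⁻¹) := by
      refine Function.LeftInverse.injective (g := LinearMap.mulLeft K x) fun v => ?_
      simp only [LinearMap.mulLeft_apply, ← mul_assoc, hx, one_mul]
    refine ⟨x, hxS, L.map (LinearMap.mulLeft K x⁻¹), ?_, ⟨x, hxL, hx'⟩, ?_⟩
    · rw [← hL]
      exact (Submodule.equivMapOfInjective _ hinj L).finrank_eq.symm
    · rw [← Submodule.map_comp, ← LinearMap.mulLeft_mul, hx, LinearMap.mulLeft_one,
        Submodule.map_id]
  · rintro ⟨x, hxS, M, -, hu, rfl⟩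
    exact ⟨x, hxS, _, hu, mul_one x⟩
end

section
/- Let K be a field, Γ₀ a linearly ordered commutative group with zero, and val : K → Γ₀ a valuation. Let n be a natural number, L ⊆ K^{n+1} a linear subspace, and let x, y ∈ K^{n+1} have all coordinates nonzero, with y ∈ L and val(x_i) = val(y_i) for every i. Set c_i = x_i·y_i^{-1} and let L' = D_c(L) be the image of L under coordinatewise multiplication by c. Then: (a) x ∈ L'; (b) L' has the same dimension as L; and (c) the sets of valuation vectors agree, i.e. {(val(z_0),…,val(z_n)) : z ∈ L'} = {(val(z_0),…,val(z_n)) : z ∈ L}. -/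
/-!
Every coordinate of `c = x * y⁻¹` is nonzero and has valuation one, because `x` and `y` have the
same coordinatewise valuations. Hence multiplication by `c` is injective, so it preserves
dimension, and it fixes the valuation vector of every point; finally `c * y = x`.
-/

/-- Moving a point of a linear space onto `x` by a Hadamard translation.
If `y ∈ L` has all coordinates nonzero, `x` has all coordinates nonzero and
`val (x i) = val (y i)` for all `i`, then `L' = D_{x ⋆ y⁻¹}(L)` contains `x`, has the same
dimension as `L`, and has the same set of coordinatewise valuation vectors as `L`. -/
theorem hadamard_translation_valuation {K : Type*} [Field K] {Γ₀ : Type*}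
    [LinearOrderedCommGroupWithZero Γ₀] (val : Valuation K Γ₀) (n : ℕ)
    (L : Submodule K (Fin (n + 1) → K)) (x y : Fin (n + 1) → K)
    (hx : ∀ i, x i ≠ 0) (hy : ∀ i, y i ≠ 0) (hyL : y ∈ L)
    (hval : ∀ i, val (x i) = val (y i)) :
    x ∈ L.map (LinearMap.mulLeft K (x * y⁻¹)) ∧
    Module.finrank K (L.map (LinearMap.mulLeft K (x * y⁻¹))) = Module.finrank K L ∧
    (fun z : Fin (n + 1) → K => fun i => val (z i)) ''
        (L.map (LinearMap.mulLeft K (x * y⁻¹)) : Set (Fin (n + 1) → K)) =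
      (fun z : Fin (n + 1) → K => fun i => val (z i)) '' (L : Set (Fin (n + 1) → K)) := by
  have hc : ∀ i, (x * y⁻¹) i ≠ 0 := fun i => mul_ne_zero (hx i) (inv_ne_zero (hy i))
  have hinj : Function.Injective (LinearMap.mulLeft K (x * y⁻¹)) := fun u v h =>
    funext fun i => mul_left_cancel₀ (hc i) (congrFun h i)
  have hone : ∀ i, val ((x * y⁻¹) i) = 1 := fun i => by
    rw [Pi.mul_apply, Pi.inv_apply, map_mul, map_inv₀, hval i]
    exact mul_inv_cancel₀ (val.ne_zero_iff.mpr (hy i))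
  have hpres : ∀ z : Fin (n + 1) → K,
      (fun i => val (LinearMap.mulLeft K (x * y⁻¹) z i)) = fun i => val (z i) := fun z =>
    funext fun i => by
      rw [LinearMap.mulLeft_apply, Pi.mul_apply, map_mul, hone i, one_mul]
  refine ⟨⟨y, hyL, funext fun i => ?_⟩, ?_, ?_⟩
  · exact inv_mul_cancel_right₀ (hy i) (x i)
  · exact (Submodule.equivMapOfInjective _ hinj L).finrank_eq.symm
  · rw [Submodule.map_coe, Set.image_image]
    exact Set.image_congr fun z _ => hpres z
end

section
/- Let V = ℝ⁴/ℝ·(1,1,1,1), let ē₀,…,ē₃ ∈ V be the images of the standard basis vectors, and for 0 ≤ i < j ≤ 3 let H_{ij} ⊆ V be the span of ē_i and ē_j. Then, as subsets of V, (H_{01} ∪ H_{23}) ∩ (H_{02} ∪ H_{13}) ∩ (H_{03} ∪ H_{12}) = span(ē₀) ∪ span(ē₁) ∪ span(ē₂) ∪ span(ē₃). -/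
/-!
A class `[x]` lies in `H_{ij}` iff the two coordinates of `x` outside `{i, j}` agree, and in
`span(ē_i)` iff the three coordinates outside `{i}` agree. The triple intersection therefore
asks for one equality from each of the three pairs of opposite edges of the complete graph on the
four coordinates. Three edges chosen this way form either a triangle, which makes three coordinates
agree, or a star, which makes all four agree. Conversely, three equal coordinates provide the edges
of a triangle, one from each opposite pair.
-/

/-- The quotient space `V = ℝ⁴ / ℝ·(1,1,1,1)`. -/
abbrev Vq : Type := (Fin 4 → ℝ) ⧸ Submodule.span ℝ ({fun _ => (1 : ℝ)} : Set (Fin 4 → ℝ))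

/-- `ē_i`: the image in `V` of the `i`-th standard basis vector of `ℝ⁴`. -/
noncomputable def ebar (i : Fin 4) : Vq := Submodule.Quotient.mk (Pi.single i 1)

/-- `H_{ij}`: the span of `ē_i` and `ē_j` in `V`. -/
noncomputable def Hplane (i j : Fin 4) : Submodule ℝ Vq := Submodule.span ℝ {ebar i, ebar j}

/-- Membership in `H_{ij}`, with `c` the multiple of `(1,1,1,1)` used to adjust the
representative. -/
theorem mk_mem_Hplane_iff_exists (i j : Fin 4) (x : Fin 4 → ℝ) :
    (Submodule.Quotient.mk x : Vq) ∈ Hplane i j ↔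
      ∃ a b c : ℝ, ∀ k, x k = a * Pi.single (M := fun _ => ℝ) i 1 k +
        b * Pi.single (M := fun _ => ℝ) j 1 k + c := by
  unfold Hplane ebar
  simp only [Submodule.mem_span_pair, ← Submodule.Quotient.mk_smul, ← Submodule.Quotient.mk_add]
  simp only [eq_comm (b := (Submodule.Quotient.mk x : Vq)), Submodule.Quotient.eq,
    Submodule.mem_span_singleton]
  refine exists_congr fun a => exists_congr fun b => exists_congr fun c => ?_
  rw [funext_iff]
  refine forall_congr' fun k => ?_
  simp only [Pi.smul_apply, Pi.sub_apply, Pi.add_apply, smul_eq_mul, mul_one]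
  constructor <;> intro h <;> linarith

/-- `[x]` lies in `H_{ij}` iff the coordinates of `x` complementary to `i, j` agree. -/
theorem mk_mem_Hplane_iff {i j k l : Fin 4} (hij : i ≠ j) (hik : i ≠ k) (hil : i ≠ l)
    (hjk : j ≠ k) (hjl : j ≠ l) (hkl : k ≠ l) (x : Fin 4 → ℝ) :
    (Submodule.Quotient.mk x : Vq) ∈ Hplane i j ↔ x k = x l := by
  rw [mk_mem_Hplane_iff_exists]
  constructor
  · rintro ⟨a, b, c, h⟩
    rw [h k, h l]
    simp [hik.symm, hil.symm, hjk.symm, hjl.symm]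
  · intro h
    refine ⟨x i - x k, x j - x k, x k, fun m => ?_⟩
    have hm : m = i ∨ m = j ∨ m = k ∨ m = l := by omega
    rcases hm with rfl | rfl | rfl | rfl
    · simp [hij]
    · simp [hij.symm]
    · simp [hik.symm, hjk.symm]
    · simp [hil.symm, hjl.symm, h]

/-- `[x]` lies in `span(ē_i)` iff the three coordinates of `x` other than the `i`-th agree. -/
theorem mk_mem_span_ebar_iff {i j k l : Fin 4} (hij : i ≠ j) (hik : i ≠ k) (hil : i ≠ l)
    (hjk : j ≠ k) (hjl : j ≠ l) (hkl : k ≠ l) (x : Fin 4 → ℝ) :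
    (Submodule.Quotient.mk x : Vq) ∈ Submodule.span ℝ {ebar i} ↔ x j = x k ∧ x k = x l := by
  -- The line `span(ē_i)` is the degenerate case `j = i` of `Hplane i j`.
  have h0 : Submodule.span ℝ {ebar i} = Hplane i i := by simp [Hplane]
  rw [h0, mk_mem_Hplane_iff_exists]
  constructor
  · rintro ⟨a, b, c, h⟩
    rw [h j, h k, h l]
    simp [hij.symm, hik.symm, hil.symm]
  · rintro ⟨h1, h2⟩
    refine ⟨x i - x k, 0, x k, fun m => ?_⟩
    have hm : m = i ∨ m = j ∨ m = k ∨ m = l := by omega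
    rcases hm with rfl | rfl | rfl | rfl
    · simp
    · simp [hij.symm, h1]
    · simp [hik.symm]
    · simp [hil.symm, h2]

/-- Lemma 3.3:
`(H₀₁ ∪ H₂₃) ∩ (H₀₂ ∪ H₁₃) ∩ (H₀₃ ∪ H₁₂) = span(ē₀) ∪ span(ē₁) ∪ span(ē₂) ∪ span(ē₃)`. -/
theorem lambda_eq_triple_intersection :
    ((Hplane 0 1 : Set Vq) ∪ (Hplane 2 3 : Set Vq)) ∩
      ((Hplane 0 2 : Set Vq) ∪ (Hplane 1 3 : Set Vq)) ∩
      ((Hplane 0 3 : Set Vq) ∪ (Hplane 1 2 : Set Vq)) =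
    (Submodule.span ℝ {ebar 0} : Set Vq) ∪ (Submodule.span ℝ {ebar 1} : Set Vq) ∪
      (Submodule.span ℝ {ebar 2} : Set Vq) ∪ (Submodule.span ℝ {ebar 3} : Set Vq) := by
  ext v
  obtain ⟨x, rfl⟩ := Submodule.Quotient.mk_surjective _ v
  simp only [Set.mem_inter_iff, Set.mem_union, SetLike.mem_coe]
  rw [mk_mem_Hplane_iff (i := 0) (j := 1) (k := 2) (l := 3)
      (by decide) (by decide) (by decide) (by decide) (by decide) (by decide),
    mk_mem_Hplane_iff (i := 2) (j := 3) (k := 0) (l := 1)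
      (by decide) (by decide) (by decide) (by decide) (by decide) (by decide),
    mk_mem_Hplane_iff (i := 0) (j := 2) (k := 1) (l := 3)
      (by decide) (by decide) (by decide) (by decide) (by decide) (by decide),
    mk_mem_Hplane_iff (i := 1) (j := 3) (k := 0) (l := 2)
      (by decide) (by decide) (by decide) (by decide) (by decide) (by decide),
    mk_mem_Hplane_iff (i := 0) (j := 3) (k := 1) (l := 2)
      (by decide) (by decide) (by decide) (by decide) (by decide) (by decide),
    mk_mem_Hplane_iff (i := 1) (j := 2) (k := 0) (l := 3)
      (by decide) (by decide) (by decide) (by decide) (by decide) (by decide),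
    mk_mem_span_ebar_iff (i := 0) (j := 1) (k := 2) (l := 3)
      (by decide) (by decide) (by decide) (by decide) (by decide) (by decide),
    mk_mem_span_ebar_iff (i := 1) (j := 0) (k := 2) (l := 3)
      (by decide) (by decide) (by decide) (by decide) (by decide) (by decide),
    mk_mem_span_ebar_iff (i := 2) (j := 0) (k := 1) (l := 3)
      (by decide) (by decide) (by decide) (by decide) (by decide) (by decide),
    mk_mem_span_ebar_iff (i := 3) (j := 0) (k := 1) (l := 2)
      (by decide) (by decide) (by decide) (by decide) (by decide) (by decide)]
  grind
end

section
/- Let V = ℝ⁴/ℝ·(1,1,1,1) with ē₀,…,ē₃ the images of the standard basis vectors, and let H_{ij} be the span of ē_i and ē_j. Let v ∈ V with v ∉ H_{01} ∪ H_{23}, and set δ = (v + {c₀ē₀ + c₁ē₁ : c₀, c₁ ≥ 0}) ∪ (v + {c₂ē₂ + c₃ē₃ : c₂, c₃ ≥ 0}). Then for every w ∈ V, the set {t·w : t ∈ ℝ} ∩ δ contains at most two elements. -/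
theorem line_inter_translate_subsingleton {K E : Type*} [Field K] [AddCommGroup E] [Module K E]
    {H : Submodule K E} {S : Set E} (hS : S ⊆ H) {v : E} (hv : v ∉ H) (w : E) :
    ((Set.range fun t : K => t • w) ∩ ((v + ·) '' S)).Subsingleton := by
  rintro _ ⟨⟨t, rfl⟩, p, hp, htp⟩ _ ⟨⟨s, rfl⟩, q, hq, hsq⟩
  dsimp only at htp hsq ⊢
  by_contra hne
  have hts : t - s ≠ 0 := fun h => hne (by rw [sub_eq_zero.mp h])
  have hmem : (t - s) • w ∈ H := by
    have h : (t - s) • w = p - q := by rw [sub_smul, ← htp, ← hsq]; abel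
    rw [h]
    exact H.sub_mem (hS hp) (hS hq)
  have hw : w ∈ H := (H.smul_mem_iff hts).mp hmem
  apply hv
  rw [eq_sub_of_add_eq htp]
  exact H.sub_mem (H.smul_mem t hw) (hS hp)

theorem cone_subset_Hplane (i j : Fin 4) :
    {p | ∃ a b : ℝ, 0 ≤ a ∧ 0 ≤ b ∧ p = a • ebar i + b • ebar j} ⊆ (Hplane i j : Set Vq) := by
  rintro _ ⟨a, b, -, -, rfl⟩
  exact Submodule.mem_span_pair.mpr ⟨a, b, rfl⟩

/-- For `v ∉ H₀₁ ∪ H₂₃`, every line through the origin meets the set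
`δ = (v + pos(ē₀,ē₁)) ∪ (v + pos(ē₂,ē₃))` in at most two points. -/
theorem line_meets_delta_in_at_most_two_points (v : Vq)
    (hv : v ∉ (Hplane 0 1 : Set Vq) ∪ (Hplane 2 3 : Set Vq)) (w : Vq) :
    ((Set.range fun t : ℝ => t • w) ∩
      (((v + ·) '' {p | ∃ c₀ c₁ : ℝ, 0 ≤ c₀ ∧ 0 ≤ c₁ ∧ p = c₀ • ebar 0 + c₁ • ebar 1}) ∪
        ((v + ·) ''
          {p | ∃ c₂ c₃ : ℝ, 0 ≤ c₂ ∧ 0 ≤ c₃ ∧ p = c₂ • ebar 2 + c₃ • ebar 3}))).encard ≤ 2 := by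
  rw [Set.inter_union_distrib_left, ← one_add_one_eq_two]
  refine (Set.encard_union_le _ _).trans (add_le_add ?_ ?_)
  · exact Set.encard_le_one_iff_subsingleton.mpr
      (line_inter_translate_subsingleton (cone_subset_Hplane 0 1) (fun h => hv (Or.inl h)) w)
  · exact Set.encard_le_one_iff_subsingleton.mpr
      (line_inter_translate_subsingleton (cone_subset_Hplane 2 3) (fun h => hv (Or.inr h)) w)
end

section
/- Let V = ℝ⁴/ℝ·(1,1,1,1) with ē₀,…,ē₃ the images of the standard basis vectors. For v ∈ V and reals a, b ≥ 0, let L(v,a,b) ⊆ V be the union of the five sets {v + a(ē₀+ē₁) + tē₀ : t ≥ 0}, {v + a(ē₀+ē₁) + tē₁ : t ≥ 0}, {v + b(ē₂+ē₃) + tē₂ : t ≥ 0}, {v + b(ē₂+ē₃) + tē₃ : t ≥ 0}, and {v + s(ē₀+ē₁) : −b ≤ s ≤ a}. Then ⋃_{a ≥ 0, b ≥ 0} L(v,a,b) = (v + {c₀ē₀ + c₁ē₁ : c₀, c₁ ≥ 0}) ∪ (v + {c₂ē₂ + c₃ē₃ : c₂, c₃ ≥ 0}). -/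
/-- The tropical line `Λ_{ab}` through `v`, corresponding to the point
`φ(v) + a·e_{01} + b·e_{23}` of `TrGr(1,3)`: two rays in directions `ē₀, ē₁` from
`v + a(ē₀+ē₁)`, two rays in directions `ē₂, ē₃` from `v + b(ē₂+ē₃)`, and the segment
joining the two vertices (note `ē₂+ē₃ = −(ē₀+ē₁)` in `V`). -/
noncomputable def Lline (v : Vq) (a b : ℝ) : Set Vq :=
  {p | ∃ t : ℝ, 0 ≤ t ∧ p = v + a • (ebar 0 + ebar 1) + t • ebar 0} ∪
  {p | ∃ t : ℝ, 0 ≤ t ∧ p = v + a • (ebar 0 + ebar 1) + t • ebar 1} ∪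
  {p | ∃ t : ℝ, 0 ≤ t ∧ p = v + b • (ebar 2 + ebar 3) + t • ebar 2} ∪
  {p | ∃ t : ℝ, 0 ≤ t ∧ p = v + b • (ebar 2 + ebar 3) + t • ebar 3} ∪
  {p | ∃ s : ℝ, -b ≤ s ∧ s ≤ a ∧ p = v + s • (ebar 0 + ebar 1)}

theorem ebar_two_add_three : ebar 2 + ebar 3 = -(ebar 0 + ebar 1) := by
  rw [eq_neg_iff_add_eq_zero]
  unfold ebar
  simp only [← Submodule.Quotient.mk_add]
  rw [Submodule.Quotient.mk_eq_zero]
  convert Submodule.mem_span_singleton_self (R := ℝ) (fun _ : Fin 4 => (1 : ℝ)) using 1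
  funext i
  fin_cases i <;> simp

/-- The union of all tropical lines `Λ_{ab}` for `a, b ≥ 0` is
`δ = (v + pos(ē₀,ē₁)) ∪ (v + pos(ē₂,ē₃))`. -/
theorem union_tropical_lines_eq_delta (v : Vq) :
    (⋃ (a : ℝ) (_ : 0 ≤ a) (b : ℝ) (_ : 0 ≤ b), Lline v a b) =
      ((v + ·) '' {p | ∃ c₀ c₁ : ℝ, 0 ≤ c₀ ∧ 0 ≤ c₁ ∧ p = c₀ • ebar 0 + c₁ • ebar 1}) ∪
        ((v + ·) '' {p | ∃ c₂ c₃ : ℝ, 0 ≤ c₂ ∧ 0 ≤ c₃ ∧ p = c₂ • ebar 2 + c₃ • ebar 3}) := by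
  ext p
  simp only [Set.mem_iUnion, exists_prop, Lline, Set.mem_union, Set.mem_ofPred_eq, Set.mem_image]
  constructor
  · rintro ⟨a, ha, b, hb, (((⟨t, ht, rfl⟩ | ⟨t, ht, rfl⟩) | ⟨t, ht, rfl⟩) | ⟨t, ht, rfl⟩) |
      ⟨s, hs, hs', rfl⟩⟩
    · exact Or.inl ⟨_, ⟨a + t, a, by positivity, ha, rfl⟩, by module⟩
    · exact Or.inl ⟨_, ⟨a, a + t, ha, by positivity, rfl⟩, by module⟩
    · exact Or.inr ⟨_, ⟨b + t, b, by positivity, hb, rfl⟩, by module⟩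
    · exact Or.inr ⟨_, ⟨b, b + t, hb, by positivity, rfl⟩, by module⟩
    · rcases le_total 0 s with h | h
      · exact Or.inl ⟨_, ⟨s, s, h, h, rfl⟩, by module⟩
      · refine Or.inr ⟨_, ⟨-s, -s, by linarith, by linarith, rfl⟩, ?_⟩
        rw [← smul_add, ebar_two_add_three]
        module
  · rintro (⟨_, ⟨c, d, hc, hd, rfl⟩, rfl⟩ | ⟨_, ⟨c, d, hc, hd, rfl⟩, rfl⟩)
    · rcases le_total c d with h | h
      · exact ⟨c, hc, 0, le_rfl,
          Or.inl (Or.inl (Or.inl (Or.inr ⟨d - c, by linarith, by module⟩)))⟩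
      · exact ⟨d, hd, 0, le_rfl,
          Or.inl (Or.inl (Or.inl (Or.inl ⟨c - d, by linarith, by module⟩)))⟩
    · rcases le_total c d with h | h
      · exact ⟨0, le_rfl, c, hc, Or.inl (Or.inr ⟨d - c, by linarith, by module⟩)⟩
      · exact ⟨0, le_rfl, d, hd, Or.inl (Or.inl (Or.inr ⟨c - d, by linarith, by module⟩))⟩
end

section
/- Let V = ℝ⁴/ℝ·(1,1,1,1) with ē₀,…,ē₃ the images of the standard basis vectors. For v ∈ V and reals a, b ≥ 0, let L(v,a,b) ⊆ V be the union of the five sets {v + a(ē₀+ē₁) + tē₀ : t ≥ 0}, {v + a(ē₀+ē₁) + tē₁ : t ≥ 0}, {v + b(ē₂+ē₃) + tē₂ : t ≥ 0}, {v + b(ē₂+ē₃) + tē₃ : t ≥ 0}, and {v + s(ē₀+ē₁) : −b ≤ s ≤ a}. Then for all reals c₀, c₁ ≥ 0 with c₀ ≠ c₁ and all a, b ≥ 0, the point p = v + c₀ē₀ + c₁ē₁ belongs to L(v,a,b) if and only if a = min(c₀, c₁). -/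
/-- The only linear relation among the `ēᵢ` is, up to scaling, `ē₀ + ē₁ + ē₂ + ē₃ = 0`. -/
theorem coeff_eq_of_sum_ebar_eq_zero {x₀ x₁ x₂ x₃ : ℝ}
    (h : x₀ • ebar 0 + x₁ • ebar 1 + x₂ • ebar 2 + x₃ • ebar 3 = 0) :
    x₀ = x₁ ∧ x₁ = x₂ ∧ x₂ = x₃ := by
  simp only [ebar, ← Submodule.Quotient.mk_smul, ← Submodule.Quotient.mk_add] at h
  rw [Submodule.Quotient.mk_eq_zero, Submodule.mem_span_singleton] at h
  obtain ⟨l, hl⟩ := h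
  have h0 := congrFun hl 0
  have h1 := congrFun hl 1
  have h2 := congrFun hl 2
  have h3 := congrFun hl 3
  simp [Pi.single_apply] at h0 h1 h2 h3
  exact ⟨h0.symm.trans h1, h1.symm.trans h2, h2.symm.trans h3⟩

/-- For `c₀, c₁ ≥ 0` with `c₀ ≠ c₁`, the point `p = v + c₀ē₀ + c₁ē₁` lies on
the tropical line `Λ_{ab}` (with `a, b ≥ 0`) if and only if `a = min(c₀, c₁)`. -/
theorem mem_tropical_line_iff_min (v : Vq) (c₀ c₁ : ℝ) (hc₀ : 0 ≤ c₀) (hc₁ : 0 ≤ c₁)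
    (hne : c₀ ≠ c₁) (a b : ℝ) (ha : 0 ≤ a) (hb : 0 ≤ b) :
    v + c₀ • ebar 0 + c₁ • ebar 1 ∈ Lline v a b ↔ a = min c₀ c₁ := by
  constructor
  · rintro ((((⟨t, ht, h⟩ | ⟨t, ht, h⟩) | ⟨t, ht, h⟩) | ⟨t, ht, h⟩) | ⟨s, -, -, h⟩) <;>
      rw [← sub_eq_zero] at h
    · obtain ⟨h0, h1, -⟩ := coeff_eq_of_sum_ebar_eq_zero
        (x₀ := c₀ - a - t) (x₁ := c₁ - a) (x₂ := 0) (x₃ := 0) (by rw [← h]; module)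
      rw [min_eq_right (by linarith)]
      linarith
    · obtain ⟨h0, h1, -⟩ := coeff_eq_of_sum_ebar_eq_zero
        (x₀ := c₀ - a) (x₁ := c₁ - a - t) (x₂ := 0) (x₃ := 0) (by rw [← h]; module)
      rw [min_eq_left (by linarith)]
      linarith
    · exact absurd (coeff_eq_of_sum_ebar_eq_zero
        (x₀ := c₀) (x₁ := c₁) (x₂ := -b - t) (x₃ := -b) (by rw [← h]; module)).1 hne
    · exact absurd (coeff_eq_of_sum_ebar_eq_zero
        (x₀ := c₀) (x₁ := c₁) (x₂ := -b) (x₃ := -b - t) (by rw [← h]; module)).1 hne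
    · have h0 := (coeff_eq_of_sum_ebar_eq_zero
        (x₀ := c₀ - s) (x₁ := c₁ - s) (x₂ := 0) (x₃ := 0) (by rw [← h]; module)).1
      exact absurd (by linarith) hne
  · rintro rfl
    rcases le_total c₀ c₁ with h | h
    · rw [min_eq_left h]
      exact Or.inl (Or.inl (Or.inl (Or.inr ⟨c₁ - c₀, sub_nonneg.2 h, by module⟩)))
    · rw [min_eq_right h]
      exact Or.inl (Or.inl (Or.inl (Or.inl ⟨c₀ - c₁, sub_nonneg.2 h, by module⟩)))
end

section
/- Index the coordinates of ℝ⁶ by the six two-element subsets of {0,1,2,3} in the order 01, 02, 12, 03, 13, 23, with standard basis vectors e_{ij}. For v = (v₀,v₁,v₂,v₃) ∈ ℝ⁴ define φ(v) = (v₀+v₁, v₀+v₂, v₁+v₂, v₀+v₃, v₁+v₃, v₂+v₃) ∈ ℝ⁶, and set f₂ = e_{02} + e_{12} + e_{23}. Then the five vectors e_{01}, e_{23}, φ(v), f₂, (1,1,1,1,1,1) are linearly independent in ℝ⁶ if and only if v₀ ≠ v₁. -/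
/-!
The vectors `e₀₁` and `e₂₃` reduce the question to the coordinates `02, 12, 03, 13`, where the
other three vectors are `(v₀+v₂, v₁+v₂, v₀+v₃, v₁+v₃)`, `(1,1,0,0)` and `(1,1,1,1)`.
The functional `x ↦ x₀₂ - x₁₂` kills the last two and takes the value `v₀ - v₁` on the first,
so if `v₀ ≠ v₁` the coefficient of `φ(v)` in a linear relation vanishes, and then so do the others.
If `v₀ = v₁`, then `φ(v)` is `(v₂ - v₃) f₂ + (v₀ + v₃) (1,…,1)` up to multiples of `e₀₁`, `e₂₃`.
-/

/-- With coordinates of `ℝ⁶` indexed by the pairs `01, 02, 12, 03, 13, 23`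
(in this order), the five vectors `e_{01}`, `e_{23}`, `φ(v)`, `f₂ = e_{02}+e_{12}+e_{23}`
and `(1,1,1,1,1,1)` are linearly independent if and only if `v₀ ≠ v₁`. -/
theorem rank_computation_iff (v : Fin 4 → ℝ) :
    LinearIndependent ℝ
      ![(Pi.single 0 1 : Fin 6 → ℝ),
        (Pi.single 5 1 : Fin 6 → ℝ),
        (![v 0 + v 1, v 0 + v 2, v 1 + v 2, v 0 + v 3, v 1 + v 3, v 2 + v 3] : Fin 6 → ℝ),
        ((Pi.single 1 1 + Pi.single 2 1 + Pi.single 5 1 : Fin 6 → ℝ)),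
        (fun _ => (1 : ℝ) : Fin 6 → ℝ)] ↔
      v 0 ≠ v 1 := by
  rw [Fintype.linearIndependent_iff]
  constructor
  · intro h hv
    have h2 := h ![v 0 - v 3, v 3 - v 0, -1, v 2 - v 3, v 0 + v 3] (by
      ext i
      fin_cases i <;> simp [Fin.sum_univ_succ, Pi.single_apply, ← hv] <;> ring) 2
    simp at h2
  · intro hv g hg
    have h0 := congrFun hg 0
    have h1 := congrFun hg 1
    have h2 := congrFun hg 2
    have h3 := congrFun hg 3
    have h5 := congrFun hg 5
    simp [Fin.sum_univ_five, Pi.single_apply] at h0 h1 h2 h3 h5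
    have g2 : g 2 = 0 := by
      have : g 2 * (v 0 - v 1) = 0 := by linear_combination h1 - h2
      exact (mul_eq_zero.mp this).resolve_right (sub_ne_zero.mpr hv)
    simp only [g2, zero_mul, zero_add, add_zero] at h0 h1 h3 h5
    intro i
    fin_cases i <;> simp <;> linarith
end
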